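/- (Tweedie's formula for the Gaussian mixture) For every x_t ∈ ℝ^d, the posterior mean of the GMM posterior equals the Tweedie estimate: ∫_{ℝ^d} x₀ · p_{0|t}(x₀ | x_t) dx₀ = x_t + σ_t² · ∇ log p_t(x_t), where the left-hand side is the Bochner integral of the ℝ^d-valued function x₀ ↦ p_{0|t}(x₀ | x_t) • x₀ and the gradient on the right is taken in the Hilbert-space sense. -/

import Mathlib

open MeasureTheory Real

/-- Isotropic Gaussian density `g_s(x; μ)` on `ℝ^d`. -/
noncomputable def gauss (d : ℕ) (s : ℝ) (x μ : EuclideanSpace ℝ (Fin d)) : ℝ :=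
  (2 * Real.pi * s) ^ (-(d : ℝ) / 2) * Real.exp (-‖x - μ‖ ^ 2 / (2 * s))

/-- GMM prior density. -/
noncomputable def gmmPrior (d N : ℕ) (μ : Fin N → EuclideanSpace ℝ (Fin d)) (σ : ℝ)
    (x : EuclideanSpace ℝ (Fin d)) : ℝ :=
  (1 / N) * ∑ i, gauss d (σ ^ 2) x (μ i)

/-- Noisy marginal density. -/
noncomputable def gmmMarginal (d N : ℕ) (μ : Fin N → EuclideanSpace ℝ (Fin d)) (σ σt : ℝ)
    (x : EuclideanSpace ℝ (Fin d)) : ℝ :=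
  (1 / N) * ∑ i, gauss d (σ ^ 2 + σt ^ 2) x (μ i)

/-- Posterior density `p_{0|t}(x₀ | x_t)`. -/
noncomputable def gmmPosterior (d N : ℕ) (μ : Fin N → EuclideanSpace ℝ (Fin d)) (σ σt : ℝ)
    (x₀ xt : EuclideanSpace ℝ (Fin d)) : ℝ :=
  gauss d (σt ^ 2) xt x₀ * gmmPrior d N μ σ x₀ / gmmMarginal d N μ σ σt xt

/-
Tweedie's formula has nothing to do with Gaussian mixtures: write `p_t(x) = ∫ g_t(x; y) p₀(y) dν(y)`
for an arbitrary prior. Since `t ∇ₓ g_t(x; y) = g_t(x; y) (y - x)`, differentiating under the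
integral gives `t ∇p_t(x) = ∫ g_t(x; y) p₀(y) y dν(y) - p_t(x) x`, and dividing by `p_t(x)` turns
this into the formula. The mixture enters only through `p_t = g_t * p₀`, that is, through the
convolution identity `g_t * g_s = g_(s + t)`.
-/

section GaussKernel

variable {E : Type*} [NormedAddCommGroup E]

/-- The Gaussian kernel without its normalising constant, which makes sense on an inner product
space of any dimension; `gauss d` is by definition a constant multiple of it. -/
noncomputable def gaussKernel (t : ℝ) (x y : E) : ℝ :=
  rexp (-‖x - y‖ ^ 2 / (2 * t))

lemma norm_gaussKernel_le_one {t : ℝ} (ht : 0 ≤ t) (x y : E) : ‖gaussKernel t x y‖ ≤ 1 := by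
  rw [gaussKernel, Real.norm_eq_abs, Real.abs_exp, Real.exp_le_one_iff, neg_div]
  exact neg_nonpos.mpr (by positivity)

lemma norm_gaussKernel_smul_sub_le [NormedSpace ℝ E] {t : ℝ} (ht : 0 < t) (x y : E) :
    ‖gaussKernel t x y • (y - x)‖ ≤ √t := by
  set r := ‖x - y‖
  have amgm : r ≤ √t * (r ^ 2 / (2 * t) + 1) := by
    have hsq : √t * (r ^ 2 / (2 * t) + 1) * (2 * √t) = r ^ 2 + 2 * √t ^ 2 := by
      field_simp
      rw [Real.sq_sqrt ht.le]
      ring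
    refine le_of_mul_le_mul_right ?_ (by positivity : 0 < 2 * √t)
    linarith [sq_nonneg (r - √t), sq_nonneg √t]
  have tangent : r ^ 2 / (2 * t) + 1 ≤ rexp (r ^ 2 / (2 * t)) := Real.add_one_le_exp _
  calc ‖gaussKernel t x y • (y - x)‖ = rexp (-(r ^ 2 / (2 * t))) * r := by
        rw [norm_smul, norm_sub_rev y x, gaussKernel, Real.norm_eq_abs, Real.abs_exp, neg_div]
    _ ≤ rexp (-(r ^ 2 / (2 * t))) * (√t * rexp (r ^ 2 / (2 * t))) := by
        gcongr
        exact amgm.trans (by gcongr)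
    _ = √t := by rw [mul_left_comm, ← Real.exp_add, neg_add_cancel, Real.exp_zero, mul_one]

@[fun_prop]
lemma continuous_gaussKernel (t : ℝ) (x : E) : Continuous (gaussKernel t x) := by
  unfold gaussKernel
  fun_prop

lemma integrable_gaussKernel_mul [MeasurableSpace E] [OpensMeasurableSpace E] {ν : Measure E}
    {f : E → ℝ} {t : ℝ} (ht : 0 ≤ t) (hf : Integrable f ν) (x : E) :
    Integrable (fun y => gaussKernel t x y * f y) ν :=
  hf.bdd_mul (by fun_prop) (.of_forall (norm_gaussKernel_le_one ht x))

variable [InnerProductSpace ℝ E]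

lemma gaussKernel_mul_gaussKernel {s t : ℝ} (hs : 0 < s) (ht : 0 < t) (x y m : E) :
    gaussKernel t x y * gaussKernel s y m =
      gaussKernel (s + t) x m *
        gaussKernel (s * t / (s + t)) y (m + (s / (s + t)) • (x - m)) := by
  have hxy : x - y = (x - m) - (y - m) := by abel
  have hym : y - (m + (s / (s + t)) • (x - m)) = (y - m) - (s / (s + t)) • (x - m) := by abel
  simp only [gaussKernel, ← Real.exp_add, Real.exp_eq_exp, hxy, hym]
  generalize x - m = a, y - m = b
  rw [norm_sub_sq_real, norm_sub_sq_real, norm_smul, inner_smul_right, real_inner_comm a b,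
    mul_pow, Real.norm_eq_abs, sq_abs]
  field_simp
  ring

lemma integral_gaussKernel [FiniteDimensional ℝ E] [MeasurableSpace E] [BorelSpace E] {t : ℝ}
    (ht : 0 < t) (m : E) :
    ∫ y, gaussKernel t y m = (2 * π * t) ^ (Module.finrank ℝ E / 2 : ℝ) := by
  have hexp (v : E) : rexp (-‖v‖ ^ 2 / (2 * t)) = rexp (-(1 / (2 * t)) * ‖v‖ ^ 2) := by
    congr 1
    ring
  simp only [gaussKernel]
  rw [integral_sub_right_eq_self (fun v : E => rexp (-‖v‖ ^ 2 / (2 * t))) m]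
  simp only [hexp]
  rw [GaussianFourier.integral_rexp_neg_mul_sq_norm (by positivity)]
  congr 1
  field_simp

lemma hasFDerivAt_gaussKernel (t : ℝ) (x y : E) :
    HasFDerivAt (fun z => gaussKernel t z y)
      (innerSL ℝ (t⁻¹ • gaussKernel t x y • (y - x))) x := by
  have h := (((hasFDerivAt_id x).sub_const y).norm_sq.neg.mul_const (2 * t)⁻¹).exp
  refine h.congr_fderiv ?_
  ext v
  simp only [gaussKernel, id_eq, Pi.neg_apply, ContinuousLinearMap.comp_id, smul_neg, neg_apply,
    smul_apply, sub_apply, coe_innerSL_apply, nsmul_eq_mul, Nat.cast_ofNat, smul_eq_mul, map_smul,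
    map_sub, div_eq_mul_inv]
  ring

variable [MeasurableSpace E] [BorelSpace E] [SecondCountableTopology E]
  {ν : Measure E} {f : E → ℝ} {t : ℝ}

lemma integrable_smul_gaussKernel_smul_sub (ht : 0 < t) (hf : Integrable f ν) (x : E) :
    Integrable (fun y => f y • gaussKernel t x y • (y - x)) ν :=
  hf.smul_bdd √t (by fun_prop) (.of_forall (norm_gaussKernel_smul_sub_le ht x))

variable [CompleteSpace E]

lemma hasGradientAt_integral_gaussKernel_mul (ht : 0 < t) (hf : Integrable f ν) (x : E) :
    HasGradientAt (fun z => ∫ y, gaussKernel t z y * f y ∂ν)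
      (t⁻¹ • ∫ y, f y • gaussKernel t x y • (y - x) ∂ν) x := by
  let F' (x y : E) : E →L[ℝ] ℝ := innerSL ℝ (t⁻¹ • f y • gaussKernel t x y • (y - x))
  have hF'_int : Integrable (F' x) ν :=
    (innerSL ℝ).integrable_comp ((integrable_smul_gaussKernel_smul_sub ht hf x).smul t⁻¹)
  have hF'_bound (x y : E) : ‖F' x y‖ ≤ t⁻¹ * (‖f y‖ * √t) := by
    rw [innerSL_apply_norm, norm_smul, norm_smul, Real.norm_of_nonneg (by positivity)]
    gcongr
    exact norm_gaussKernel_smul_sub_le ht x y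
  have hF_deriv (x y : E) : HasFDerivAt (fun x => gaussKernel t x y * f y) (F' x y) x := by
    refine ((hasFDerivAt_gaussKernel t x y).mul_const (f y)).congr_fderiv ?_
    rw [← map_smul, smul_comm]
  have hfderiv := hasFDerivAt_integral_of_dominated_of_fderiv_le Filter.univ_mem
    (.of_forall fun z => (integrable_gaussKernel_mul ht.le hf z).aestronglyMeasurable)
    (integrable_gaussKernel_mul ht.le hf x) hF'_int.aestronglyMeasurable
    (.of_forall fun y z _ => hF'_bound z y) ((hf.norm.mul_const √t).const_mul t⁻¹)
    (.of_forall fun y z _ => hF_deriv z y)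
  rw [hasGradientAt_iff_hasFDerivAt, ← integral_smul]
  refine hfderiv.congr_fderiv ?_
  exact (innerSL ℝ).integral_comp_comm ((integrable_smul_gaussKernel_smul_sub ht hf x).smul t⁻¹)

lemma integral_gaussKernel_mul_smul (ht : 0 < t) (hf : Integrable f ν) (x : E) :
    ∫ y, (gaussKernel t x y * f y) • y ∂ν =
      (∫ y, gaussKernel t x y * f y ∂ν) • x +
        t • gradient (fun z => ∫ y, gaussKernel t z y * f y ∂ν) x := by
  have hsplit (y : E) : (gaussKernel t x y * f y) • y =
      (gaussKernel t x y * f y) • x + f y • gaussKernel t x y • (y - x) := by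
    rw [smul_smul, mul_comm (f y), ← smul_add, add_sub_cancel]
  simp only [hsplit]
  rw [integral_add ((integrable_gaussKernel_mul ht.le hf x).smul_const x)
      (integrable_smul_gaussKernel_smul_sub ht hf x), integral_smul_const,
    (hasGradientAt_integral_gaussKernel_mul ht hf x).gradient, smul_inv_smul₀ ht.ne']

end GaussKernel

lemma gradient_log {E : Type*} [NormedAddCommGroup E] [InnerProductSpace ℝ E] [CompleteSpace E]
    {p : E → ℝ} {x : E} (hp : DifferentiableAt ℝ p x) (hx : p x ≠ 0) :
    gradient (fun y => Real.log (p y)) x = (p x)⁻¹ • gradient p x := by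
  simp only [gradient, (hp.hasFDerivAt.log hx).fderiv, map_smul]

section Gauss

variable {d : ℕ} {s t : ℝ}

lemma gauss_pos (hs : 0 < s) (x m : EuclideanSpace ℝ (Fin d)) : 0 < gauss d s x m := by
  unfold gauss
  positivity

lemma integral_gauss (hs : 0 < s) (m : EuclideanSpace ℝ (Fin d)) : ∫ x, gauss d s x m = 1 := by
  calc ∫ x, gauss d s x m = (2 * π * s) ^ (-(d : ℝ) / 2) * ∫ x, gaussKernel s x m :=
        integral_const_mul _ _
    _ = (2 * π * s) ^ (-(d : ℝ) / 2 + d / 2) := by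
        rw [integral_gaussKernel hs, finrank_euclideanSpace_fin, Real.rpow_add (by positivity)]
    _ = 1 := by rw [neg_div, neg_add_cancel, Real.rpow_zero]

lemma integrable_gauss (hs : 0 < s) (m : EuclideanSpace ℝ (Fin d)) :
    Integrable (fun x => gauss d s x m) :=
  .of_integral_ne_zero (by rw [integral_gauss hs]; exact one_ne_zero)

lemma gauss_mul_gauss (hs : 0 < s) (ht : 0 < t) (x y m : EuclideanSpace ℝ (Fin d)) :
    gauss d t x y * gauss d s y m =
      gauss d (s + t) x m * gauss d (s * t / (s + t)) y (m + (s / (s + t)) • (x - m)) := by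
  have hconst : (2 * π * t) ^ (-(d : ℝ) / 2) * (2 * π * s) ^ (-(d : ℝ) / 2) =
      (2 * π * (s + t)) ^ (-(d : ℝ) / 2) * (2 * π * (s * t / (s + t))) ^ (-(d : ℝ) / 2) := by
    rw [← Real.mul_rpow (by positivity) (by positivity),
      ← Real.mul_rpow (by positivity) (by positivity)]
    congr 1
    field_simp
  have hkernel := gaussKernel_mul_gaussKernel hs ht x y m
  unfold gaussKernel at hkernel
  simp only [gauss]
  rw [mul_mul_mul_comm, hconst, hkernel, mul_mul_mul_comm]

lemma integrable_gauss_mul_gauss (hs : 0 < s) (ht : 0 < t) (x m : EuclideanSpace ℝ (Fin d)) :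
    Integrable (fun y => gauss d t x y * gauss d s y m) := by
  simp only [gauss_mul_gauss hs ht]
  exact (integrable_gauss (by positivity) _).const_mul _

lemma integral_gauss_mul_gauss (hs : 0 < s) (ht : 0 < t) (x m : EuclideanSpace ℝ (Fin d)) :
    ∫ y, gauss d t x y * gauss d s y m = gauss d (s + t) x m := by
  simp only [gauss_mul_gauss hs ht]
  rw [integral_const_mul, integral_gauss (by positivity), mul_one]

end Gauss

section GaussianMixture

variable {d N : ℕ} {σ σt : ℝ}

lemma integrable_gmmPrior (hσ : 0 < σ) (μ : Fin N → EuclideanSpace ℝ (Fin d)) :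
    Integrable (gmmPrior d N μ σ) :=
  (integrable_finsetSum _ fun i _ => integrable_gauss (by positivity) (μ i)).const_mul _

lemma gmmMarginal_pos (hN : 1 ≤ N) (hσ : 0 < σ) (μ : Fin N → EuclideanSpace ℝ (Fin d))
    (x : EuclideanSpace ℝ (Fin d)) : 0 < gmmMarginal d N μ σ σt x := by
  have : NeZero N := ⟨Nat.one_le_iff_ne_zero.mp hN⟩
  have hsum : 0 < ∑ i, gauss d (σ ^ 2 + σt ^ 2) x (μ i) :=
    Finset.sum_pos (fun i _ => gauss_pos (by positivity) x (μ i)) Finset.univ_nonempty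
  exact mul_pos (by positivity) hsum

lemma gmmMarginal_eq_integral (hσ : 0 < σ) (hσt : 0 < σt)
    (μ : Fin N → EuclideanSpace ℝ (Fin d)) (x : EuclideanSpace ℝ (Fin d)) :
    gmmMarginal d N μ σ σt x = ∫ y, gauss d (σt ^ 2) x y * gmmPrior d N μ σ y := by
  have hs : 0 < σ ^ 2 := by positivity
  have ht : 0 < σt ^ 2 := by positivity
  simp only [gmmPrior, gmmMarginal, mul_left_comm _ (1 / (N : ℝ)), Finset.mul_sum]
  rw [integral_finsetSum _ fun i _ => (integrable_gauss_mul_gauss hs ht x (μ i)).const_mul _]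
  simp only [integral_const_mul, integral_gauss_mul_gauss hs ht]

end GaussianMixture

theorem gmm_tweedie_general {d : ℕ} {ν : Measure (EuclideanSpace ℝ (Fin d))}
    {p₀ pₜ : EuclideanSpace ℝ (Fin d) → ℝ} {t : ℝ} (ht : 0 < t) (hp₀ : Integrable p₀ ν)
    (hpₜ : ∀ x, pₜ x = ∫ y, gauss d t x y * p₀ y ∂ν) {x : EuclideanSpace ℝ (Fin d)}
    (hx : pₜ x ≠ 0) :
    ∫ y, (gauss d t x y * p₀ y / pₜ x) • y ∂ν =
      x + t • gradient (fun z => Real.log (pₜ z)) x := by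
  let q (y : EuclideanSpace ℝ (Fin d)) : ℝ := (2 * π * t) ^ (-(d : ℝ) / 2) * p₀ y
  have hq : Integrable q ν := hp₀.const_mul _
  have gauss_mul (z y) : gauss d t z y * p₀ y = gaussKernel t z y * q y := by
    simp only [gauss, gaussKernel, q]
    ring
  have hpₜ' : pₜ = fun z => ∫ y, gaussKernel t z y * q y ∂ν := by
    ext z
    simp only [hpₜ, gauss_mul]
  have hdiff : DifferentiableAt ℝ pₜ x := by
    rw [hpₜ']
    exact (hasGradientAt_integral_gaussKernel_mul ht hq x).differentiableAt
  calc ∫ y, (gauss d t x y * p₀ y / pₜ x) • y ∂ν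
      = (pₜ x)⁻¹ • ∫ y, (gaussKernel t x y * q y) • y ∂ν := by
        simp only [gauss_mul, div_eq_inv_mul, mul_smul (pₜ x)⁻¹, integral_smul]
    _ = (pₜ x)⁻¹ • (pₜ x • x + t • gradient pₜ x) := by
        rw [integral_gaussKernel_mul_smul ht hq x, ← hpₜ', ← congrFun hpₜ' x]
    _ = x + t • gradient (fun z => Real.log (pₜ z)) x := by
        rw [gradient_log hdiff hx, smul_add, inv_smul_smul₀ hx, smul_comm]

/-- (Tweedie's formula for the Gaussian mixture) The posterior mean equals the Tweedie
estimate `x_t + σ_t² ∇ log p_t(x_t)`. -/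
theorem gmm_tweedie (d N : ℕ) (hd : 1 ≤ d) (hN : 1 ≤ N)
    (μ : Fin N → EuclideanSpace ℝ (Fin d)) (σ σt : ℝ) (hσ : 0 < σ) (hσt : 0 < σt)
    (xt : EuclideanSpace ℝ (Fin d)) :
    ∫ x₀ : EuclideanSpace ℝ (Fin d), gmmPosterior d N μ σ σt x₀ xt • x₀
      = xt + (σt ^ 2) • gradient (fun y => Real.log (gmmMarginal d N μ σ σt y)) xt :=
  gmm_tweedie_general (by positivity) (integrable_gmmPrior hσ μ)
    (gmmMarginal_eq_integral hσ hσt μ) (gmmMarginal_pos hN hσ μ xt).ne'
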